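/- Suppose every irreducible component of Φ is of type A. Let I ⊆ Δ and λ ∈ Λ_I⁺. Then Σ_{β∈Ψ_λ⁺} θ(s_βλ) = 0 in the free ℤ-module on h* if and only if Ψ_λ⁺⁺ = ∅. -/

import Mathlib

open scoped RealInnerProductSpace
open Classical

noncomputable section

namespace JantzenGVM

variable {V : Type*} [NormedAddCommGroup V] [InnerProductSpace ℝ V] [FiniteDimensional ℝ V]

/-- The coroot `α^∨ = 2α/⟨α,α⟩` of a vector `α` (junk value `0` when `α = 0`). -/
def coroot (α : V) : V := (2 / ⟪α, α⟫) • α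

/-- The linear functional `v ↦ ⟨v, α^∨⟩`. -/
def corootForm (α : V) : V →ₗ[ℝ] ℝ where
  toFun v := ⟪v, coroot α⟫
  map_add' x y := by simp [inner_add_left]
  map_smul' c x := by simp [inner_smul_left]

lemma corootForm_self {α : V} (h : ⟪α, α⟫ ≠ 0) : corootForm α α = 2 := by
  simp only [corootForm, coroot, LinearMap.coe_mk, AddHom.coe_mk, real_inner_smul_right]
  field_simp

/-- The reflection `s_α` as a linear automorphism of `V` (the identity when `⟨α,α⟩ = 0`). -/
def reflV (α : V) : V ≃ₗ[ℝ] V :=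
  if h : ⟪α, α⟫ = 0 then LinearEquiv.refl ℝ V
  else Module.reflection (corootForm_self h)

/-- `h* = ℂ ⊗ V`, realized as the space of real-linear functionals `V → ℂ` via the
inner product; an element `λ` pairs with a root `α` by `⟨λ, α⟩ = λ α` and with the
coroot by `⟨λ, α^∨⟩ = λ (coroot α)`. -/
abbrev HStar (V : Type*) [NormedAddCommGroup V] [InnerProductSpace ℝ V] := V →ₗ[ℝ] ℂ

/-- The canonical embedding of `V` into `h*`. -/
def emb (α : V) : HStar V where
  toFun v := (⟪α, v⟫ : ℂ)
  map_add' x y := by simp [inner_add_right]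
  map_smul' c x := by simp [inner_smul_right, Complex.real_smul]

/-- The action of a linear automorphism `w` of `V` on `h*`: `(w • λ)(v) = λ(w⁻¹ v)`. -/
def wAct (w : V ≃ₗ[ℝ] V) (l : HStar V) : HStar V := l ∘ₗ (w.symm : V →ₗ[ℝ] V)

/-- The reflection `s_β λ = λ - ⟨λ, β^∨⟩ β` acting on `h*`. -/
def sRefl (β : V) (l : HStar V) : HStar V := l - l (coroot β) • emb β

/-- The group generated by the reflections in the elements of `Φ'`. -/
def weyl (Φ' : Set V) : Subgroup (V ≃ₗ[ℝ] V) :=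
  Subgroup.closure {w | ∃ α ∈ Φ', w = reflV α}

/-- A finite, reduced, crystallographic root system spanning the Euclidean space `V`,
together with a choice of positive system and the corresponding simple system. -/
structure RootSys (V : Type*) [NormedAddCommGroup V] [InnerProductSpace ℝ V]
    [FiniteDimensional ℝ V] where
  Φ : Finset V
  pos : Finset V
  Δ : Finset V
  ne_zero : ∀ α ∈ Φ, α ≠ (0 : V)
  span_eq_top : Submodule.span ℝ (Φ : Set V) = ⊤
  reduced : ∀ α ∈ Φ, ∀ c : ℝ, c • α ∈ Φ → c = 1 ∨ c = -1
  refl_mem : ∀ α ∈ Φ, ∀ β ∈ Φ, reflV α β ∈ Φ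
  crystallographic : ∀ α ∈ Φ, ∀ β ∈ Φ, ∃ n : ℤ, ⟪β, coroot α⟫ = (n : ℝ)
  pos_subset : pos ⊆ Φ
  mem_pos_or : ∀ α ∈ Φ, α ∈ pos ∨ -α ∈ pos
  not_both : ∀ α ∈ pos, -α ∉ pos
  simple_subset : Δ ⊆ pos
  simple_indep : LinearIndependent ℝ (fun x : {a : V // a ∈ Δ} => x.1)
  simple_gen : ∀ β ∈ pos, ∃ c : V → ℝ, (∀ α ∈ Δ, 0 ≤ c α) ∧ β = ∑ α ∈ Δ, c α • α

/-- A subsystem of the root system: a subset of `Φ` closed under its own reflections. -/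
def IsSubsystem (S : RootSys V) (Φ' : Set V) : Prop :=
  Φ' ⊆ (S.Φ : Set V) ∧ ∀ α ∈ Φ', ∀ β ∈ Φ', reflV α β ∈ Φ'

/-- The length of `w`, i.e. the number of positive roots sent to negative roots
(this equals the Coxeter length for elements of the Weyl group). -/
def len (S : RootSys V) (w : V ≃ₗ[ℝ] V) : ℕ :=
  {β ∈ (S.pos : Set V) | w β ∉ (S.pos : Set V)}.ncard

/-- `Φ_I = ℤI ∩ Φ`, the subsystem generated by a subset `I` of the simple roots. -/
def PhiI (S : RootSys V) (I : Finset V) : Set V :=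
  {α ∈ (S.Φ : Set V) | α ∈ Submodule.span ℤ (I : Set V)}

/-- `z` is a positive integer. -/
def IsPosInt (z : ℂ) : Prop := ∃ n : ℤ, 0 < n ∧ z = (n : ℂ)

/-- `z` is an integer. -/
def IsInt (z : ℂ) : Prop := ∃ n : ℤ, z = (n : ℂ)

/-- `Λ_I⁺ = {λ ∈ h* : ⟨λ, α^∨⟩ ∈ ℤ_{>0} for all α ∈ I}`. -/
def LambdaP (I : Set V) : Set (HStar V) :=
  {l | ∀ α ∈ I, IsPosInt (l (coroot α))}

/-- `Λ⁺(Φ'', Φ') = {ν ∈ ℂΦ' : ⟨ν, α^∨⟩ ∈ ℤ_{>0} for all α ∈ Φ'' ∩ Φ⁺}`. -/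
def LambdaPSub (S : RootSys V) (Φ'' Φ' : Set V) : Set (HStar V) :=
  {l | l ∈ Submodule.span ℂ (emb '' Φ') ∧
       ∀ α ∈ Φ'' ∩ (S.pos : Set V), IsPosInt (l (coroot α))}

/-- `λ` is `Φ''`-regular: `⟨λ, α⟩ ≠ 0` for all `α ∈ Φ''`. -/
def IsRegularOn (Φ'' : Set V) (l : HStar V) : Prop := ∀ α ∈ Φ'', l α ≠ 0

/-- `Ψ⁺(λ, Φ'', Φ') = {β ∈ (Φ' ∩ Φ⁺) \ Φ'' : ⟨λ, β^∨⟩ ∈ ℤ_{>0}}`. -/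
def PsiP (S : RootSys V) (Φ'' Φ' : Set V) (l : HStar V) : Set V :=
  {β | β ∈ Φ' ∩ (S.pos : Set V) ∧ β ∉ Φ'' ∧ IsPosInt (l (coroot β))}

/-- `Ψ⁺⁺(λ, Φ'', Φ') = {β ∈ Ψ⁺(λ, Φ'', Φ') : s_β λ is Φ''-regular}`. -/
def PsiPP (S : RootSys V) (Φ'' Φ' : Set V) (l : HStar V) : Set V :=
  {β ∈ PsiP S Φ'' Φ' l | ∀ α ∈ Φ'', (sRefl β l) α ≠ 0}

/-- The sign function: `sgn(λ, μ) = (-1)^{ℓ(w)}` if `λ, μ` are `Φ''`-regular and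
`μ = wλ` for some `w ∈ W(Φ'')`, and `0` otherwise. -/
def sgnW (S : RootSys V) (Φ'' : Set V) (l m : HStar V) : ℤ :=
  if h : IsRegularOn Φ'' l ∧ IsRegularOn Φ'' m ∧ ∃ w, w ∈ weyl Φ'' ∧ m = wAct w l
  then (-1) ^ len S h.2.2.choose else 0

/-- The Jantzen coefficient `c(λ, μ, Φ'', Φ') = Σ_{β ∈ Ψ⁺⁺(λ,Φ'',Φ')} sgn(s_β λ, μ)`. -/
def jc (S : RootSys V) (Φ'' Φ' : Set V) (l m : HStar V) : ℤ :=
  ∑ᶠ β ∈ PsiPP S Φ'' Φ' l, sgnW S Φ'' (sRefl β l) m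

/-- The symmetrized Jantzen coefficient `c̃(λ, μ, Φ'', Φ')`. -/
def jcSym (S : RootSys V) (Φ'' Φ' : Set V) (l m : HStar V) : ℤ :=
  jc S Φ'' Φ' l m + jc S Φ'' Φ' m l

/-- `θ(λ) = Σ_{w ∈ W_I} (-1)^{ℓ(w)} e^{wλ}` in the free `ℤ`-module on `h*`. -/
def theta (S : RootSys V) (I : Finset V) (l : HStar V) : HStar V →₀ ℤ :=
  ∑ᶠ w ∈ (weyl (PhiI S I) : Set (V ≃ₗ[ℝ] V)),
    Finsupp.single (wAct w l) ((-1) ^ len S w)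

/-- `Φ_λ = {α ∈ Φ : ⟨λ, α⟩ = 0}`. -/
def singSet (S : RootSys V) (l : HStar V) : Set V :=
  {α ∈ (S.Φ : Set V) | l α = 0}

/-- `Φ_{[λ]} = {α ∈ Φ : ⟨λ, α^∨⟩ ∈ ℤ}`. -/
def integralSet (S : RootSys V) (l : HStar V) : Set V :=
  {α ∈ (S.Φ : Set V) | IsInt (l (coroot α))}

/-- `(ℚ A) ∩ Φ`, the intersection of the rational span of `A` with `Φ`.
Taking `A = Φ_I ∪ {β}` gives `Φ_{β,1}`; taking `A = Φ_λ ∪ {β}` gives `Φ_{β,2}`. -/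
def ratSpanRoots (S : RootSys V) (A : Set V) : Set V :=
  {γ ∈ (S.Φ : Set V) | ∃ (t : Finset V) (c : V → ℚ),
    (t : Set V) ⊆ A ∧ γ = ∑ α ∈ t, (c α : ℝ) • α}

/-- `Φ_{β,0}`, the irreducible component of `Φ` containing `β`. -/
def component (S : RootSys V) (β : V) : Set V :=
  {γ ∈ (S.Φ : Set V) |
    Relation.ReflTransGen
      (fun x y => x ∈ (S.Φ : Set V) ∧ y ∈ (S.Φ : Set V) ∧ ⟪x, y⟫ ≠ 0) β γ}

/-- `λ|_{Φ'}`: the unique element of `ℂΦ'` with `⟨λ|_{Φ'}, α^∨⟩ = ⟨λ, α^∨⟩`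
for all `α ∈ Φ'`. -/
def restrictW (Φ' : Set V) (l : HStar V) : HStar V :=
  letI : Nonempty (HStar V) := ⟨0⟩
  Classical.epsilon fun m =>
    m ∈ Submodule.span ℂ (emb '' Φ') ∧ ∀ α ∈ Φ', m (coroot α) = l (coroot α)

/-- `ᴵWᴶ = {w ∈ W : ℓ(uwv) = ℓ(u) + ℓ(w) + ℓ(v) for all u ∈ W_I, v ∈ W_J}`. -/
def doubleCoset (S : RootSys V) (I J : Finset V) : Set (V ≃ₗ[ℝ] V) :=
  {w | w ∈ weyl (S.Φ : Set V) ∧ ∀ u ∈ weyl (PhiI S I), ∀ v ∈ weyl (PhiI S J),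
    len S (u * w * v) = len S u + len S w + len S v}

/-- The fundamental weight `ϖ_j` relative to an enumeration `e` of the simple roots:
the unique element of `h*` with `⟨ϖ_j, α_k^∨⟩ = δ_{jk}`. -/
def fundWeight {n : ℕ} (e : Fin n → V) (j : Fin n) : HStar V :=
  letI : Nonempty (HStar V) := ⟨0⟩
  Classical.epsilon fun m => ∀ k : Fin n, m (coroot (e k)) = if k = j then 1 else 0

/-- The labels of the irreducible Dynkin types. -/
inductive LieType | A | B | C | D | E | F | G
deriving DecidableEq

/-- The Cartan matrix of type `A_n` (1-based indices): entry `(i,j)` is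
`⟨α_i, α_j^∨⟩`. -/
def cartanA (i j : ℕ) : ℤ :=
  if i = j then 2 else if i + 1 = j ∨ j + 1 = i then -1 else 0

/-- The Cartan matrices of the irreducible types in the standard (Bourbaki/Humphreys)
numbering of the Dynkin diagram: `cartanEntry t n i j = ⟨α_i, α_j^∨⟩` (1-based). -/
def cartanEntry : LieType → ℕ → ℕ → ℕ → ℤ
  | .A, _, i, j => cartanA i j
  | .B, n, i, j => if i + 1 = n ∧ j = n then -2 else cartanA i j
  | .C, n, i, j => if i = n ∧ j + 1 = n then -2 else cartanA i j
  | .D, n, i, j =>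
      if i = j then 2
      else if (i + 2 = n ∧ j = n) ∨ (i = n ∧ j + 2 = n) then -1
      else if (i + 1 = n ∧ j = n) ∨ (i = n ∧ j + 1 = n) then 0
      else cartanA i j
  | .E, _, i, j =>
      if i = j then 2
      else if (i = 1 ∧ j = 3) ∨ (i = 3 ∧ j = 1) ∨ (i = 2 ∧ j = 4) ∨ (i = 4 ∧ j = 2) then -1
      else if (i = 1 ∧ j = 2) ∨ (i = 2 ∧ j = 1) ∨ (i = 2 ∧ j = 3) ∨ (i = 3 ∧ j = 2) then 0
      else cartanA i j
  | .F, _, i, j => if i = 2 ∧ j = 3 then -2 else cartanA i j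
  | .G, _, i, j => if i = 2 ∧ j = 1 then -3 else cartanA i j

/-- The standard basis vector `e_k` (1-based index, junk `0` outside `1 ≤ k ≤ n`). -/
def stdE (n k : ℕ) : EuclideanSpace ℝ (Fin n) :=
  if h : 1 ≤ k ∧ k ≤ n then EuclideanSpace.single ⟨k - 1, by omega⟩ 1 else 0

/-- The labels `B`, `C`, `D` of the classical non-`A` types. -/
inductive BCD | B | C | D
deriving DecidableEq

/-- The root set of `B_n` / `C_n` / `D_n` in the standard realization. -/
def bcdRoots (t : BCD) (n : ℕ) : Set (EuclideanSpace ℝ (Fin n)) :=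
  {v | (∃ i j : ℕ, 1 ≤ i ∧ i < j ∧ j ≤ n ∧
          (v = stdE n i - stdE n j ∨ v = -(stdE n i - stdE n j) ∨
           v = stdE n i + stdE n j ∨ v = -(stdE n i + stdE n j))) ∨
       (match t with
        | .B => ∃ i : ℕ, 1 ≤ i ∧ i ≤ n ∧ (v = stdE n i ∨ v = -stdE n i)
        | .C => ∃ i : ℕ, 1 ≤ i ∧ i ≤ n ∧ (v = (2:ℝ) • stdE n i ∨ v = -((2:ℝ) • stdE n i))
        | .D => False)}

/-- The positive roots of `B_n` / `C_n` / `D_n` in the standard realization. -/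
def bcdPos (t : BCD) (n : ℕ) : Set (EuclideanSpace ℝ (Fin n)) :=
  {v | (∃ i j : ℕ, 1 ≤ i ∧ i < j ∧ j ≤ n ∧
          (v = stdE n i - stdE n j ∨ v = stdE n i + stdE n j)) ∨
       (match t with
        | .B => ∃ i : ℕ, 1 ≤ i ∧ i ≤ n ∧ v = stdE n i
        | .C => ∃ i : ℕ, 1 ≤ i ∧ i ≤ n ∧ v = (2:ℝ) • stdE n i
        | .D => False)}

/-- The simple roots of `B_n` / `C_n` / `D_n` in the standard realization. -/
def bcdSimple (t : BCD) (n : ℕ) : Set (EuclideanSpace ℝ (Fin n)) :=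
  {v | (∃ i : ℕ, 1 ≤ i ∧ i < n ∧ v = stdE n i - stdE n (i + 1)) ∨
       (match t with
        | .B => v = stdE n n
        | .C => v = (2:ℝ) • stdE n n
        | .D => v = stdE n (n - 1) + stdE n n)}

/-- The simple root `α_k` of `B_n` / `C_n` / `D_n` (1-based index `k`). -/
def bcdAlpha (t : BCD) (n k : ℕ) : EuclideanSpace ℝ (Fin n) :=
  if k < n then stdE n k - stdE n (k + 1)
  else match t with
  | .B => stdE n n
  | .C => (2:ℝ) • stdE n n
  | .D => stdE n (n - 1) + stdE n n


section helpers

/-! ### Reflections and signs -/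

lemma reflV_apply (α v : V) : reflV α v = v - ⟪v, coroot α⟫ • α := by
  unfold reflV
  split_ifs with h
  · have : α = 0 := inner_self_eq_zero.mp h
    simp [this]
  · rw [Module.reflection_apply]
    rfl

lemma inner_coroot (v α : V) : ⟪v, coroot α⟫ = 2 / ⟪α, α⟫ * ⟪v, α⟫ := by
  simp [coroot, real_inner_smul_right]

lemma reflV_self (α : V) : reflV α α = -α := by
  rw [reflV_apply, inner_coroot]
  by_cases h : ⟪α, α⟫ = 0
  · have : α = 0 := inner_self_eq_zero.mp h
    simp [this]
  · rw [div_mul_cancel₀ _ h, two_smul]; abel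

lemma reflV_reflV (α v : V) : reflV α (reflV α v) = v := by
  rw [reflV_apply α v, map_sub, map_smul, reflV_self, reflV_apply]
  simp

lemma reflV_symm (α : V) : (reflV α).symm = reflV α := by
  ext v
  rw [LinearEquiv.symm_apply_eq, reflV_reflV]

lemma wAct_reflV (β : V) (l : HStar V) : wAct (reflV β) l = sRefl β l := by
  ext v
  simp only [wAct, sRefl, reflV_symm, LinearMap.comp_apply, LinearEquiv.coe_coe,
    LinearMap.sub_apply, LinearMap.smul_apply, emb, LinearMap.coe_mk, AddHom.coe_mk]
  rw [reflV_apply, map_sub, map_smul, inner_coroot]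
  simp only [coroot, map_smul, Complex.real_smul, smul_eq_mul, real_inner_comm v β]
  push_cast
  ring

lemma wAct_apply (w : V ≃ₗ[ℝ] V) (l : HStar V) (v : V) : wAct w l v = l (w.symm v) := rfl

lemma wAct_mul (w u : V ≃ₗ[ℝ] V) (l : HStar V) : wAct (w * u) l = wAct w (wAct u l) := by
  ext v; rfl

lemma sRefl_apply (β : V) (l : HStar V) (v : V) : sRefl β l v = l (reflV β v) := by
  rw [← wAct_reflV, wAct_apply, reflV_symm]

variable (S : RootSys V)

lemma neg_mem {α : V} (h : α ∈ S.Φ) : -α ∈ S.Φ := by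
  have := S.refl_mem α h α h
  rwa [reflV_self] at this

lemma weyl_mem_Φ {w : V ≃ₗ[ℝ] V} (hw : w ∈ weyl (S.Φ : Set V)) :
    ∀ α, α ∈ S.Φ → w α ∈ S.Φ := by
  unfold weyl at hw
  induction hw using Subgroup.closure_induction'' with
  | one => intro α h; exact h
  | mem x hx =>
    obtain ⟨γ, hγ, rfl⟩ := hx
    intro α h; exact S.refl_mem γ hγ α h
  | inv_mem x hx =>
    obtain ⟨γ, hγ, rfl⟩ := hx
    intro α h
    have : (reflV γ)⁻¹ α = reflV γ α := by
      change (reflV γ).symm α = _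
      rw [reflV_symm]
    rw [this]
    exact S.refl_mem γ hγ α h
  | mul x y _ _ hx hy => intro α h; exact hx _ (hy _ h)

lemma weyl_mono {A B : Set V} (h : A ⊆ B) : weyl A ≤ weyl B := by
  apply Subgroup.closure_mono
  rintro w ⟨α, hα, rfl⟩
  exact ⟨α, h hα, rfl⟩

/-- the sign of a vector -/
def sg (v : V) : ℤ := if v ∈ S.pos then 1 else -1

/-- the product of signs of the images of the positive roots -/
def eps (w : V ≃ₗ[ℝ] V) : ℤ := ∏ β ∈ S.pos, sg S (w β)

lemma eps_eq (w : V ≃ₗ[ℝ] V) : (-1 : ℤ) ^ len S w = eps S w := by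
  unfold eps sg len
  rw [Finset.prod_ite]
  simp only [Finset.prod_const_one, one_mul, Finset.prod_const]
  congr 1
  rw [← Set.ncard_coe_finset]
  congr 1
  ext; simp

lemma sg_neg {α : V} (h : α ∈ S.Φ) : sg S (-α) = - sg S α := by
  unfold sg
  have h1 := S.mem_pos_or α h
  have h2 := S.not_both α
  by_cases h3 : α ∈ S.pos
  · simp [h3, h2 h3]
  · simp [h3, h1.resolve_left h3]

lemma sg_sq (α : V) : sg S α * sg S α = 1 := by
  unfold sg; split_ifs <;> simp

/-- the positive one among `±α` -/
def pabs (α : V) : V := if α ∈ S.pos then α else -α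

lemma pabs_mem {α : V} (h : α ∈ S.Φ) : pabs S α ∈ S.pos := by
  unfold pabs
  split_ifs with h1
  · exact h1
  · exact (S.mem_pos_or α h).resolve_left h1

lemma pabs_of_pos {α : V} (h : α ∈ S.pos) : pabs S α = α := by simp [pabs, h]

lemma pabs_of_neg {α : V} (h : α ∈ S.pos) : pabs S (-α) = α := by
  simp [pabs, S.not_both α h]

lemma pabs_neg {α : V} (h : α ∈ S.Φ) : pabs S (-α) = pabs S α := by
  rcases S.mem_pos_or α h with h1 | h1
  · rw [pabs_of_neg S h1, pabs_of_pos S h1]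
  · rw [pabs_of_pos S h1]
    have := pabs_of_neg S h1
    rw [neg_neg] at this
    exact this.symm

lemma sg_map {w : V ≃ₗ[ℝ] V} (hw : w ∈ weyl (S.Φ : Set V)) {α : V} (h : α ∈ S.Φ) :
    sg S (w α) = sg S (w (pabs S α)) * sg S α := by
  by_cases h1 : α ∈ S.pos
  · simp [pabs, sg, h1]
  · have : sg S α = -1 := by simp [sg, h1]
    rw [this]
    simp only [pabs, h1, if_false, map_neg]
    rw [sg_neg S (weyl_mem_Φ S hw α h)]
    ring

lemma pabs_map {w : V ≃ₗ[ℝ] V} (hw : w ∈ weyl (S.Φ : Set V)) {α : V} (h : α ∈ S.Φ) :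
    pabs S (w (pabs S α)) = pabs S (w α) := by
  by_cases h1 : α ∈ S.pos
  · rw [pabs_of_pos S h1]
  · have : pabs S α = -α := by simp [pabs, h1]
    rw [this, map_neg, pabs_neg S (weyl_mem_Φ S hw α h)]

lemma eps_mul {w u : V ≃ₗ[ℝ] V} (hw : w ∈ weyl (S.Φ : Set V)) (hu : u ∈ weyl (S.Φ : Set V)) :
    eps S (w * u) = eps S w * eps S u := by
  have h1 : eps S (w * u) = ∏ β ∈ S.pos, (sg S (w (pabs S (u β))) * sg S (u β)) := by
    unfold eps
    refine Finset.prod_congr rfl fun β hβ => ?_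
    exact sg_map S hw (weyl_mem_Φ S hu β (S.pos_subset hβ))
  rw [h1, Finset.prod_mul_distrib]
  congr 1
  unfold eps
  have hui : u⁻¹ ∈ weyl (S.Φ : Set V) := inv_mem hu
  refine Finset.prod_bij' (fun β _ => pabs S (u β)) (fun β _ => pabs S (u⁻¹ β)) ?_ ?_ ?_ ?_ ?_
  · intro β hβ; exact pabs_mem S (weyl_mem_Φ S hu β (S.pos_subset hβ))
  · intro β hβ; exact pabs_mem S (weyl_mem_Φ S hui β (S.pos_subset hβ))
  · intro β hβ
    rw [pabs_map S hui (weyl_mem_Φ S hu β (S.pos_subset hβ))]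
    have : u⁻¹ (u β) = β := u.symm_apply_apply β
    rw [this, pabs_of_pos S hβ]
  · intro β hβ
    rw [pabs_map S hu (weyl_mem_Φ S hui β (S.pos_subset hβ))]
    have : u (u⁻¹ β) = β := u.apply_symm_apply β
    rw [this, pabs_of_pos S hβ]
  · intro β hβ; rfl

lemma eps_reflV {α : V} (h : α ∈ S.pos) : eps S (reflV α) = -1 := by
  unfold eps
  have hΦ := S.pos_subset h
  have hs : reflV α ∈ weyl (S.Φ : Set V) := Subgroup.subset_closure ⟨α, hΦ, rfl⟩
  rw [← Finset.mul_prod_erase _ _ h]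
  have h1 : sg S (reflV α α) = -1 := by
    rw [reflV_self, sg_neg S hΦ]; simp [sg, h]
  rw [h1]
  have h2 : ∏ β ∈ S.pos.erase α, sg S (reflV α β) = 1 := by
    refine Finset.prod_involution (fun β _ => pabs S (reflV α β)) ?_ ?_ ?_ ?_
    · intro β hβ
      have hβ' := S.pos_subset (Finset.mem_of_mem_erase hβ)
      have h3 := sg_map S hs (weyl_mem_Φ S hs β hβ')
      rw [reflV_reflV] at h3
      have h4 : sg S β = 1 := by simp [sg, Finset.mem_of_mem_erase hβ]
      rw [h4] at h3
      rw [mul_comm]; exact h3.symm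
    · intro β hβ hne heq
      have hβ' := S.pos_subset (Finset.mem_of_mem_erase hβ)
      have hb := Finset.mem_of_mem_erase hβ
      have hn : reflV α β ∉ S.pos := by
        intro hp; apply hne; simp [sg, hp]
      simp only [pabs, hn, if_false] at heq
      rw [reflV_apply] at heq
      have h5 : β = (⟪β, coroot α⟫ / 2) • α := by
        have h6 : (2:ℝ) • β = ⟪β, coroot α⟫ • α := by
          rw [two_smul]
          nth_rewrite 1 [← heq]
          abel
        rw [div_eq_inv_mul, mul_smul, ← h6, smul_smul]
        norm_num
      have h7 := S.reduced α hΦ (⟪β, coroot α⟫ / 2) (h5 ▸ hβ')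
      rcases h7 with h7 | h7
      · rw [h7, one_smul] at h5
        exact (Finset.ne_of_mem_erase hβ) h5
      · rw [h7, neg_one_smul] at h5
        exact S.not_both α h (h5 ▸ hb)
    · intro β hβ
      have hβ' := S.pos_subset (Finset.mem_of_mem_erase hβ)
      have hb := Finset.mem_of_mem_erase hβ
      refine Finset.mem_erase.mpr ⟨?_, pabs_mem S (weyl_mem_Φ S hs β hβ')⟩
      intro heq
      have h8 := pabs_map S hs (weyl_mem_Φ S hs β hβ')
      rw [heq, reflV_reflV, reflV_self, pabs_of_neg S h, pabs_of_pos S hb] at h8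
      exact (Finset.ne_of_mem_erase hβ) h8.symm
    · intro β hβ
      have hβ' := S.pos_subset (Finset.mem_of_mem_erase hβ)
      have hb := Finset.mem_of_mem_erase hβ
      rw [pabs_map S hs (weyl_mem_Φ S hs β hβ'), reflV_reflV, pabs_of_pos S hb]
  rw [h2]; rfl

lemma reflV_neg (α : V) : reflV (-α) = reflV α := by
  ext v
  rw [reflV_apply, reflV_apply, inner_coroot, inner_coroot]
  simp

lemma eps_reflV' {α : V} (h : α ∈ S.Φ) : eps S (reflV α) = -1 := by
  rcases S.mem_pos_or α h with h1 | h1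
  · exact eps_reflV S h1
  · rw [← reflV_neg]; exact eps_reflV S h1

lemma PhiI_subset (I : Finset V) : PhiI S I ⊆ (S.Φ : Set V) := fun _ h => h.1

lemma theta_eq_zero (I : Finset V) (hfin : (weyl (PhiI S I) : Set (V ≃ₗ[ℝ] V)).Finite)
    (l : HStar V) (α : V) (hα : α ∈ PhiI S I) (hl : l α = 0) : theta S I l = 0 := by
  unfold theta
  rw [finsum_mem_eq_finite_toFinset_sum _ hfin]
  have hsI : reflV α ∈ weyl (PhiI S I) := Subgroup.subset_closure ⟨α, hα, rfl⟩
  have hs := weyl_mono (PhiI_subset S I) hsI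
  have hfix : wAct (reflV α) l = l := by
    rw [wAct_reflV]
    unfold sRefl
    simp [coroot, hl]
  have hsign : ∀ w ∈ weyl (PhiI S I),
      (-1 : ℤ) ^ len S (w * reflV α) = - (-1 : ℤ) ^ len S w := by
    intro w hw
    rw [eps_eq, eps_eq, eps_mul S (weyl_mono (PhiI_subset S I) hw) hs, eps_reflV' S hα.1]
    ring
  refine Finset.sum_involution (fun w _ => w * reflV α) ?_ ?_ ?_ ?_
  · intro w hw
    have hw' : w ∈ weyl (PhiI S I) := by simpa using hw
    rw [wAct_mul, hfix, hsign w hw', ← Finsupp.single_add]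
    simp
  · intro w hw _ heq
    have hw' : w ∈ weyl (PhiI S I) := by simpa using hw
    have h1 := hsign w hw'
    rw [heq] at h1
    have h2 : (-1 : ℤ) ^ len S w ≠ 0 := pow_ne_zero _ (by norm_num)
    omega
  · intro w hw
    have hw' : w ∈ weyl (PhiI S I) := by simpa using hw
    simpa using mul_mem hw' hsI
  · intro w hw
    rw [mul_assoc]
    have : reflV α * reflV α = 1 := by
      ext v; exact reflV_reflV α v
    rw [this, mul_one]

/-! ### Type `A` coordinates -/

/-- Coordinates realizing every root as a difference `E i - E j`. -/
structure Coord (S : RootSys V) (ι κ : Type*) where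
  E : ι → V
  comp : ι → κ
  N : κ → ℝ
  N_pos : ∀ c, 0 < N c
  inner_eq : ∀ i j m, comp i = comp j → ⟪E i - E j, E m⟫ =
    N (comp i) / 2 * ((if m = i then 1 else 0) - (if m = j then 1 else 0))
  root_mem : ∀ i j, i ≠ j → comp i = comp j → E i - E j ∈ S.Φ
  root_ex : ∀ α ∈ S.Φ, ∃ i j, i ≠ j ∧ comp i = comp j ∧ α = E i - E j

/-- The reflection formula, from the inner products. -/
lemma refl_swap {ι : Type*} {E : ι → V} {n : ℝ} (hn : 0 < n) {i j : ι} (hij : i ≠ j)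
    (h : ∀ m, ⟪E i - E j, E m⟫ =
      n / 2 * ((if m = i then 1 else 0) - (if m = j then 1 else 0))) (m : ι) :
    reflV (E i - E j) (E m) = E (Equiv.swap i j m) := by
  have hN : ⟪E i - E j, E i - E j⟫ = n := by
    rw [inner_sub_right, h, h]
    simp only [if_true, hij, hij.symm, if_false]
    ring
  rw [reflV_apply, inner_coroot, hN, real_inner_comm, h, Equiv.swap_apply_def]
  by_cases h1 : m = i
  · subst h1
    simp only [if_true, hij, if_false]
    have : 2 / n * (n / 2 * (1 - 0)) = 1 := by field_simp; ring
    rw [this]; simp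
  · by_cases h2 : m = j
    · subst h2
      simp only [if_true, hij.symm, if_false]
      have : 2 / n * (n / 2 * (0 - 1)) = -1 := by field_simp; ring
      rw [this]; simp
    · simp [h1, h2]

namespace Coord

variable {S} {ι κ : Type*} (C : Coord S ι κ)

lemma refl (i j m : ι) (hij : i ≠ j) (hc : C.comp i = C.comp j) :
    reflV (C.E i - C.E j) (C.E m) = C.E (Equiv.swap i j m) :=
  refl_swap (C.N_pos _) hij (fun m => C.inner_eq i j m hc) m

lemma span_top : Submodule.span ℝ (Set.range C.E) = ⊤ := by
  rw [eq_top_iff, ← S.span_eq_top, Submodule.span_le]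
  intro α hα
  obtain ⟨i, j, _, _, rfl⟩ := C.root_ex α hα
  exact sub_mem (Submodule.subset_span ⟨i, rfl⟩) (Submodule.subset_span ⟨j, rfl⟩)

/-- being in the same block -/
def blk (I : Finset V) (i j : ι) : Prop :=
  C.comp i = C.comp j ∧ C.E i - C.E j ∈ Submodule.span ℤ (I : Set V)

lemma blk_refl (I : Finset V) (i : ι) : C.blk I i i := ⟨rfl, by simp⟩

lemma blk_symm {I : Finset V} {i j : ι} (h : C.blk I i j) : C.blk I j i :=
  ⟨h.1.symm, by rw [← neg_sub]; exact Submodule.neg_mem _ h.2⟩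

lemma blk_trans {I : Finset V} {i j k : ι} (h : C.blk I i j) (h' : C.blk I j k) :
    C.blk I i k :=
  ⟨h.1.trans h'.1, by rw [← sub_add_sub_cancel _ (C.E j)]; exact add_mem h.2 h'.2⟩

lemma blk_root {I : Finset V} {i j : ι} (hij : i ≠ j) (h : C.blk I i j) :
    C.E i - C.E j ∈ PhiI S I := ⟨C.root_mem i j hij h.1, h.2⟩

lemma refl_perm {I : Finset V} {γ : V} (hγ : γ ∈ PhiI S I) :
    ∃ σ : Equiv.Perm ι, (∀ m, reflV γ (C.E m) = C.E (σ m)) ∧ ∀ m, C.blk I (σ m) m := by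
  obtain ⟨i, j, hij, hc, rfl⟩ := C.root_ex γ hγ.1
  have hb : C.blk I i j := ⟨hc, hγ.2⟩
  refine ⟨Equiv.swap i j, fun m => C.refl i j m hij hc, fun m => ?_⟩
  rw [Equiv.swap_apply_def]
  split_ifs with h1 h2
  · subst h1; exact C.blk_symm hb
  · subst h2; exact hb
  · exact C.blk_refl I m

lemma weyl_perm {I : Finset V} {w : V ≃ₗ[ℝ] V} (hw : w ∈ weyl (PhiI S I)) :
    ∃ σ : Equiv.Perm ι, (∀ m, w (C.E m) = C.E (σ m)) ∧ ∀ m, C.blk I (σ m) m := by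
  unfold weyl at hw
  induction hw using Subgroup.closure_induction'' with
  | one => exact ⟨1, fun m => rfl, fun m => C.blk_refl I m⟩
  | mem x hx =>
    obtain ⟨γ, hγ, rfl⟩ := hx
    exact C.refl_perm hγ
  | inv_mem x hx =>
    obtain ⟨γ, hγ, rfl⟩ := hx
    have : (reflV γ)⁻¹ = reflV γ := reflV_symm γ
    rw [this]
    exact C.refl_perm hγ
  | mul x y _ _ hx hy =>
    obtain ⟨σ, h1, h2⟩ := hx
    obtain ⟨τ, h3, h4⟩ := hy
    refine ⟨σ * τ, fun m => ?_, fun m => ?_⟩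
    · change x (y (C.E m)) = _
      rw [h3, h1]; rfl
    · exact C.blk_trans (h2 _) (h4 _)

lemma ext_equiv {w u : V ≃ₗ[ℝ] V} (h : ∀ m, w (C.E m) = u (C.E m)) : w = u := by
  apply LinearEquiv.toLinearMap_injective
  apply LinearMap.ext_on_range (v := C.E) C.span_top
  exact h

lemma weyl_finite [Finite ι] (C : Coord S ι κ) (I : Finset V) :
    (weyl (PhiI S I) : Set (V ≃ₗ[ℝ] V)).Finite := by
  have h1 : (Set.pi Set.univ (fun _ : ι => Set.range C.E)).Finite :=
    Set.Finite.pi' (fun _ => Set.finite_range C.E) |>.subset (by intro f hf; simpa using hf)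
  refine Set.Finite.of_finite_image (f := fun w : V ≃ₗ[ℝ] V => fun m => w (C.E m))
    (h1.subset ?_) ?_
  · rintro _ ⟨w, hw, rfl⟩ m _
    obtain ⟨σ, h2, _⟩ := C.weyl_perm hw
    exact ⟨σ m, (h2 m).symm⟩
  · intro w _ u _ h
    exact C.ext_equiv (fun m => congrFun h m)

/-- The combinatorial heart: distinct roots give distinct orbits. -/
lemma key {I : Finset V} (x : ι → ℂ) (hx : ∀ a b, C.blk I a b → x a = x b → a = b)
    {i j p q : ι} (σ : Equiv.Perm ι)
    (hxi : ∀ m, C.blk I i m → x j ≠ x m) (hxj : ∀ m, C.blk I j m → x i ≠ x m)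
    (hσ : ∀ m, C.blk I (σ m) m)
    (heq : ∀ m, x (Equiv.swap i j (σ m)) = x (Equiv.swap p q m)) :
    (i = p ∧ j = q) ∨ (i = q ∧ j = p) := by
  have hij : i ≠ j := fun h => hxi i (C.blk_refl I i) (by rw [h])
  obtain ⟨m, rfl⟩ := σ.surjective i
  obtain ⟨n, rfl⟩ := σ.surjective j
  have h1 := heq m
  have h2 := heq n
  rw [Equiv.swap_apply_left] at h1
  rw [Equiv.swap_apply_right] at h2
  have hmn : m ≠ n := fun h => hij (by rw [h])
  have hm : m = p ∨ m = q := by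
    by_contra hh
    push Not at hh
    rw [Equiv.swap_apply_of_ne_of_ne hh.1 hh.2] at h1
    exact hxi m (hσ m) h1
  have hn : n = p ∨ n = q := by
    by_contra hh
    push Not at hh
    rw [Equiv.swap_apply_of_ne_of_ne hh.1 hh.2] at h2
    exact hxj n (hσ n) h2
  rcases hm with rfl | rfl <;> rcases hn with rfl | rfl
  · exact absurd rfl hmn
  · rw [Equiv.swap_apply_left] at h1
    rw [Equiv.swap_apply_right] at h2
    exact Or.inl ⟨hx _ _ (hσ _) h2, hx _ _ (hσ _) h1⟩
  · rw [Equiv.swap_apply_right] at h1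
    rw [Equiv.swap_apply_left] at h2
    exact Or.inr ⟨hx _ _ (hσ _) h2, hx _ _ (hσ _) h1⟩
  · exact absurd rfl hmn

end Coord

lemma lam_coroot (l : HStar V) (α : V) : l (coroot α) = ((2 / ⟪α, α⟫ : ℝ) : ℂ) * l α := by
  simp [coroot, map_smul, Complex.real_smul]

lemma lam_pos {I : Finset V} (hI : I ⊆ S.Δ) {l : HStar V} (hl : l ∈ LambdaP (I : Set V))
    {α : V} (h : α ∈ I) : ∃ r : ℝ, 0 < r ∧ l α = r := by
  obtain ⟨n, hn, h1⟩ := hl α h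
  rw [lam_coroot] at h1
  have hα : α ≠ 0 := S.ne_zero α (S.pos_subset (S.simple_subset (hI h)))
  have h2 : 0 < ⟪α, α⟫ := real_inner_self_pos.mpr hα
  refine ⟨⟪α, α⟫ / 2 * n, by positivity, ?_⟩
  push_cast
  rw [← h1]
  push_cast
  have : ((⟪α, α⟫ : ℝ) : ℂ) ≠ 0 := by exact_mod_cast h2.ne'
  field_simp

lemma pos_coeff {I : Finset V} (hI : I ⊆ S.Δ) {α : V} (hα : α ∈ S.pos)
    (hs : α ∈ Submodule.span ℤ (I : Set V)) :
    ∃ c : V → ℝ, (∀ γ ∈ I, 0 ≤ c γ) ∧ α = ∑ γ ∈ I, c γ • γ := by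
  obtain ⟨c, hc, hsum⟩ := S.simple_gen α hα
  have hs' : α ∈ Submodule.span ℝ (I : Set V) :=
    Submodule.span_le_restrictScalars ℤ ℝ (I : Set V) hs
  obtain ⟨d, _, hd⟩ := Submodule.mem_span_finset.mp hs'
  have hli := S.simple_indep
  have hlin := (linearIndepOn_finset_iff (v := (id : V → V)) (s := S.Δ)).mp hli
  have hz : ∑ γ ∈ S.Δ, (c γ - if γ ∈ I then d γ else 0) • (id γ : V) = 0 := by
    simp only [sub_smul, Finset.sum_sub_distrib, id, ite_smul, zero_smul]
    rw [← hsum, Finset.sum_ite_mem, Finset.inter_eq_right.mpr hI, hd, sub_self]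
  have hz' := hlin _ hz
  refine ⟨c, fun γ hγ => hc γ (hI hγ), ?_⟩
  rw [← hd]
  refine Finset.sum_congr rfl fun γ hγ => ?_
  have := hz' γ (hI hγ)
  simp only [hγ, if_true] at this
  rw [sub_eq_zero.mp this]

lemma lam_ne {I : Finset V} (hI : I ⊆ S.Δ) {l : HStar V} (hl : l ∈ LambdaP (I : Set V))
    {α : V} (hα : α ∈ PhiI S I) : l α ≠ 0 := by
  wlog hp : α ∈ S.pos generalizing α
  · have h1 : -α ∈ PhiI S I := ⟨neg_mem S hα.1, Submodule.neg_mem _ hα.2⟩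
    have := this h1 ((S.mem_pos_or α hα.1).resolve_left hp)
    simpa using this
  obtain ⟨c, hc, hsum⟩ := pos_coeff S hI hp hα.2
  have hr : ∀ γ ∈ I, ∃ r : ℝ, 0 < r ∧ l γ = r := fun γ hγ => lam_pos S hI hl hγ
  choose! r hr0 hr1 using hr
  have h2 : l α = ((∑ γ ∈ I, c γ * r γ : ℝ) : ℂ) := by
    conv_lhs => rw [hsum]
    rw [map_sum]
    push_cast
    refine Finset.sum_congr rfl fun γ hγ => ?_
    rw [map_smul, hr1 γ hγ, Complex.real_smul]
  rw [h2]
  intro h0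
  have h3 : ∑ γ ∈ I, c γ * r γ = 0 := by exact_mod_cast h0
  rw [Finset.sum_eq_zero_iff_of_nonneg
    (fun γ hγ => mul_nonneg (hc γ hγ) (hr0 γ hγ).le)] at h3
  apply S.ne_zero α hα.1
  rw [hsum]
  refine Finset.sum_eq_zero fun γ hγ => ?_
  have := h3 γ hγ
  rcases mul_eq_zero.mp this with h4 | h4
  · simp [h4]
  · exact absurd h4 (hr0 γ hγ).ne'

lemma Coord.orbit {ι κ : Type*} (C : Coord S ι κ) {I : Finset V} (hI : I ⊆ S.Δ)
    {l : HStar V} (hl : l ∈ LambdaP (I : Set V)) {β β' : V}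
    (hβ : β ∈ PsiPP S (PhiI S I) (S.Φ : Set V) l)
    (hβ' : β' ∈ PsiP S (PhiI S I) (S.Φ : Set V) l)
    {w : V ≃ₗ[ℝ] V} (hw : w ∈ weyl (PhiI S I))
    (heq : wAct w (sRefl β' l) = sRefl β l) : β' = β ∧ w = 1 := by
  obtain ⟨i, j, hij, hc, rfl⟩ := C.root_ex β hβ.1.1.1
  obtain ⟨p, q, hpq, hc', rfl⟩ := C.root_ex β' hβ'.1.1
  obtain ⟨σ, hσ1, hσ2⟩ := C.weyl_perm hw
  have hreg := hβ.2
  have hx : ∀ a b, C.blk I a b → l (C.E a) = l (C.E b) → a = b := by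
    intro a b hab h
    by_contra hne
    apply lam_ne S hI hl (C.blk_root hne hab)
    rw [map_sub, h, sub_self]
  have hy : ∀ a b, C.blk I a b → l (C.E (Equiv.swap i j a)) = l (C.E (Equiv.swap i j b)) →
      a = b := by
    intro a b hab h
    by_contra hne
    apply hreg _ (C.blk_root hne hab)
    rw [sRefl_apply, map_sub, C.refl _ _ _ hij hc, C.refl _ _ _ hij hc, map_sub, h, sub_self]
  have hlij : l (C.E i) ≠ l (C.E j) := by
    intro h
    obtain ⟨n, hn, h1⟩ := hβ.1.2.2
    rw [lam_coroot, map_sub, h, sub_self, mul_zero] at h1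
    have : n = 0 := by exact_mod_cast h1.symm
    omega
  have hnb : ¬ C.blk I i j := fun h => hβ.1.2.1 (C.blk_root hij h)
  have hxi : ∀ m, C.blk I i m → l (C.E j) ≠ l (C.E m) := by
    intro m hm h
    by_cases h1 : m = i
    · subst h1; exact hlij h.symm
    · have h2 : m ≠ j := by rintro rfl; exact hnb hm
      apply h1
      refine (hy i m hm ?_).symm
      rw [Equiv.swap_apply_left, Equiv.swap_apply_of_ne_of_ne h1 h2, h]
  have hxj : ∀ m, C.blk I j m → l (C.E i) ≠ l (C.E m) := by
    intro m hm h
    by_cases h1 : m = j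
    · subst h1; exact hlij h
    · have h2 : m ≠ i := by rintro rfl; exact hnb (C.blk_symm hm)
      apply h1
      refine (hy j m hm ?_).symm
      rw [Equiv.swap_apply_right, Equiv.swap_apply_of_ne_of_ne h2 h1, h]
  have heq' : ∀ m, l (C.E (Equiv.swap i j (σ m))) = l (C.E (Equiv.swap p q m)) := by
    intro m
    have h1 := LinearMap.congr_fun heq (C.E (σ m))
    rw [wAct_apply, sRefl_apply, sRefl_apply, C.refl _ _ _ hij hc, ← hσ1,
      LinearEquiv.symm_apply_apply, C.refl _ _ _ hpq hc'] at h1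
    exact h1.symm
  rcases C.key (fun m => l (C.E m)) hx σ hxi hxj hσ2 heq' with ⟨rfl, rfl⟩ | ⟨rfl, rfl⟩
  · refine ⟨rfl, C.ext_equiv fun m => ?_⟩
    rw [hσ1]
    rw [hy _ _ (hσ2 m) (heq' m)]
    rfl
  · exfalso
    have h1 := hβ.1.1.2
    have h2 := hβ'.1.2
    apply S.not_both _ h1
    rw [neg_sub]
    exact h2

lemma Coord.main {ι κ : Type*} [Finite ι] (C : Coord S ι κ) (I : Finset V) (hI : I ⊆ S.Δ)
    (lam : HStar V) (hlam : lam ∈ LambdaP (I : Set V)) :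
    (∑ᶠ β ∈ PsiP S (PhiI S I) (S.Φ : Set V) lam, theta S I (sRefl β lam)) = 0 ↔
      PsiPP S (PhiI S I) (S.Φ : Set V) lam = ∅ := by
  have hfin := C.weyl_finite I
  have hPfin : (PsiP S (PhiI S I) (S.Φ : Set V) lam).Finite :=
    S.Φ.finite_toSet.subset (fun β hβ => hβ.1.1)
  constructor
  · intro h
    by_contra hne
    obtain ⟨β, hβ⟩ := Set.nonempty_iff_ne_empty.mpr hne
    have h1 := DFunLike.congr_fun h (sRefl β lam)
    rw [finsum_mem_eq_finite_toFinset_sum _ hPfin, Finsupp.finsetSum_apply,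
      Finset.sum_eq_single β] at h1
    · unfold theta at h1
      rw [finsum_mem_eq_finite_toFinset_sum _ hfin, Finsupp.finsetSum_apply,
        Finset.sum_eq_single 1] at h1
      · have h2 : wAct 1 (sRefl β lam) = sRefl β lam := by ext v; rfl
        rw [h2, Finsupp.single_eq_same] at h1
        exact pow_ne_zero _ (by norm_num) h1
      · intro w hw hw1
        have hw' : w ∈ weyl (PhiI S I) := by simpa using hw
        rw [Finsupp.single_apply, if_neg]
        intro heq
        exact hw1 (C.orbit S hI hlam hβ hβ.1 hw' heq).2
      · intro hn
        exact absurd (by simpa using one_mem (weyl (PhiI S I))) hn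
    · intro β' hβ' hne'
      have hβ'' : β' ∈ PsiP S (PhiI S I) (S.Φ : Set V) lam := by simpa using hβ'
      unfold theta
      rw [finsum_mem_eq_finite_toFinset_sum _ hfin, Finsupp.finsetSum_apply]
      refine Finset.sum_eq_zero fun w hw => ?_
      have hw' : w ∈ weyl (PhiI S I) := by simpa using hw
      rw [Finsupp.single_apply, if_neg]
      intro heq
      exact hne' (C.orbit S hI hlam hβ hβ'' hw' heq).1
    · intro hn
      exact absurd (by simpa using hβ.1) hn
  · intro h
    refine finsum_mem_of_eqOn_zero fun β hβ => ?_
    have h1 : β ∉ PsiPP S (PhiI S I) (S.Φ : Set V) lam := by rw [h]; simp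
    have h2 : ¬ ∀ α ∈ PhiI S I, (sRefl β lam) α ≠ 0 := fun hh => h1 ⟨hβ, hh⟩
    push Not at h2
    obtain ⟨α, hα, h3⟩ := h2
    exact theta_eq_zero S I hfin _ α hα h3

/-! ### Construction of the coordinates -/

lemma const_of_step {k : ℕ} (g : Fin (k + 1) → ℝ)
    (h : ∀ j : Fin k, g j.castSucc = g j.succ) (m : Fin (k + 1)) : g m = g 0 := by
  induction m using Fin.induction with
  | zero => rfl
  | succ j ih => rw [← h j, ih]

lemma chain {k : ℕ} (a : Fin k → V) (N : ℝ)
    (hG : ∀ i j : Fin k, ⟪a i, a j⟫ = N / 2 * (cartanA ((i : ℕ) + 1) ((j : ℕ) + 1) : ℝ)) :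
    ∃ E : Fin (k + 1) → V, (∀ i : Fin k, E i.castSucc - E i.succ = a i) ∧
      (∀ p q m, ⟪E p - E q, E m⟫ =
        N / 2 * ((if m = p then 1 else 0) - (if m = q then 1 else 0))) ∧
      ∀ m, E m ∈ Submodule.span ℝ (Set.range a) := by
  set P : Fin (k + 1) → V := fun m => -∑ l : Fin k with l.val < m.val, a l with hP
  have hstepP : ∀ i : Fin k, P i.castSucc - P i.succ = a i := by
    intro i
    have h1 : (Finset.univ.filter fun l : Fin k => l.val < i.succ.val) =
        insert i (Finset.univ.filter fun l : Fin k => l.val < i.castSucc.val) := by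
      ext l
      simp only [Finset.mem_filter, Finset.mem_univ, true_and, Finset.mem_insert,
        Fin.val_succ, Fin.val_castSucc, Fin.ext_iff]
      omega
    simp only [hP]
    rw [h1, Finset.sum_insert (by simp)]
    abel
  have hPspan : ∀ m, P m ∈ Submodule.span ℝ (Set.range a) := by
    intro m
    exact Submodule.neg_mem _ (Submodule.sum_mem _ fun l _ => Submodule.subset_span ⟨l, rfl⟩)
  set E : Fin (k + 1) → V := fun m => P m - ((k + 1 : ℕ) : ℝ)⁻¹ • ∑ l, P l with hE
  have hstep : ∀ i : Fin k, E i.castSucc - E i.succ = a i := by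
    intro i
    rw [← hstepP i]
    simp only [hE]
    abel
  have hsum : ∑ m, E m = 0 := by
    simp only [hE, Finset.sum_sub_distrib, Finset.sum_const, Finset.card_univ, Fintype.card_fin]
    rw [← Nat.cast_smul_eq_nsmul ℝ, smul_smul, mul_inv_cancel₀ (by positivity), one_smul,
      sub_self]
  have hE1 : ∀ (i : Fin k) (m : Fin (k + 1)), ⟪a i, E m⟫ =
      N / 2 * ((if m = i.castSucc then 1 else 0) - (if m = i.succ then 1 else 0)) := by
    intro i
    set g : Fin (k + 1) → ℝ := fun m => ⟪a i, E m⟫ -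
      N / 2 * ((if m = i.castSucc then 1 else 0) - (if m = i.succ then 1 else 0)) with hg
    have hgc : ∀ m, g m = g 0 := by
      apply const_of_step
      intro j
      have h1 : ⟪a i, E j.castSucc⟫ - ⟪a i, E j.succ⟫ = N / 2 *
          (cartanA ((i : ℕ) + 1) ((j : ℕ) + 1) : ℝ) := by
        rw [← inner_sub_right, hstep, hG]
      have h2 : (cartanA ((i : ℕ) + 1) ((j : ℕ) + 1) : ℝ) =
          ((if j.castSucc = i.castSucc then 1 else 0) - (if j.castSucc = i.succ then 1 else 0))
          - ((if j.succ = i.castSucc then 1 else 0) - (if j.succ = i.succ then 1 else 0)) := by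
        simp only [cartanA, Fin.ext_iff, Fin.val_succ, Fin.val_castSucc]
        split_ifs <;> first | omega | norm_num
      rw [h2] at h1
      simp only [hg]
      linarith
    have hgs : ∑ m, g m = 0 := by
      simp only [hg, Finset.sum_sub_distrib, ← Finset.mul_sum, ← inner_sum, hsum]
      simp
    rw [Finset.sum_congr rfl (fun m _ => hgc m)] at hgs
    simp only [Finset.sum_const, Finset.card_univ, Fintype.card_fin, nsmul_eq_mul] at hgs
    have hg0 : g 0 = 0 := by
      rcases mul_eq_zero.mp hgs with h | h
      · exact absurd h (by positivity)
      · exact h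
    intro m
    have := hgc m
    rw [hg0] at this
    simp only [hg] at this
    linarith
  refine ⟨E, hstep, ?_, ?_⟩
  · intro p q m
    have hh : ∀ r, (⟪E r, E m⟫ - N / 2 * (if m = r then 1 else 0)) =
        (⟪E 0, E m⟫ - N / 2 * (if m = 0 then 1 else 0)) := by
      apply const_of_step (fun r => ⟪E r, E m⟫ - N / 2 * (if m = r then 1 else 0))
      intro j
      have h1 := hE1 j m
      rw [← hstep j, inner_sub_left] at h1
      linarith
    have h1 := hh p
    have h2 := hh q
    rw [inner_sub_left]
    linarith
  · intro m
    exact Submodule.sub_mem _ (hPspan m)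
      (Submodule.smul_mem _ _ (Submodule.sum_mem _ fun l _ => hPspan l))

lemma gram {k : ℕ} (e : Fin k → V) (hne : ∀ i, e i ≠ 0)
    (h : ∀ a b : Fin k, ⟪e a, coroot (e b)⟫ = (cartanA ((a : ℕ) + 1) ((b : ℕ) + 1) : ℝ)) :
    ∃ N : ℝ, 0 < N ∧ ∀ i j : Fin k,
      ⟪e i, e j⟫ = N / 2 * (cartanA ((i : ℕ) + 1) ((j : ℕ) + 1) : ℝ) := by
  have hp : ∀ i, 0 < ⟪e i, e i⟫ := fun i => real_inner_self_pos.mpr (hne i)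
  have h1 : ∀ i j, ⟪e i, e j⟫ = ⟪e j, e j⟫ / 2 * (cartanA ((i : ℕ) + 1) ((j : ℕ) + 1) : ℝ) := by
    intro i j
    rw [← h, inner_coroot]
    have := (hp j).ne'
    field_simp
  cases k with
  | zero => exact ⟨1, one_pos, fun i => i.elim0⟩
  | succ k =>
    refine ⟨⟪e 0, e 0⟫, hp 0, ?_⟩
    have hc : ∀ j, ⟪e j, e j⟫ = ⟪e 0, e 0⟫ := by
      apply const_of_step (fun j => ⟪e j, e j⟫)
      intro j
      have h2 := h1 j.castSucc j.succ
      have h3 := h1 j.succ j.castSucc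
      rw [real_inner_comm, h3] at h2
      simp [cartanA] at h2
      simpa using h2
    intro i j
    rw [h1, hc]

lemma component_orth {β β' γ γ' : V} (hγ : γ ∈ component S β) (hγ' : γ' ∈ component S β')
    (hne : component S β ≠ component S β') : ⟪γ, γ'⟫ = 0 := by
  by_contra h
  apply hne
  have hsymm : ∀ x y, Relation.ReflTransGen
      (fun x y => x ∈ (S.Φ : Set V) ∧ y ∈ (S.Φ : Set V) ∧ ⟪x, y⟫ ≠ 0) x y →
      Relation.ReflTransGen
      (fun x y => x ∈ (S.Φ : Set V) ∧ y ∈ (S.Φ : Set V) ∧ ⟪x, y⟫ ≠ 0) y x := by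
    intro x y hxy
    induction hxy with
    | refl => exact Relation.ReflTransGen.refl
    | tail _ h ih => exact ih.head ⟨h.2.1, h.1, by rw [real_inner_comm]; exact h.2.2⟩
  have h1 := (hγ.2.tail ⟨hγ.1, hγ'.1, h⟩).trans (hsymm _ _ hγ'.2)
  ext δ
  constructor
  · rintro ⟨h2, h3⟩
    exact ⟨h2, (hsymm _ _ h1).trans h3⟩
  · rintro ⟨h2, h3⟩
    exact ⟨h2, h1.trans h3⟩

lemma span_orth {A B : Set V} (h : ∀ x ∈ A, ∀ y ∈ B, ⟪x, y⟫ = 0) {x y : V}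
    (hx : x ∈ Submodule.span ℝ A) (hy : y ∈ Submodule.span ℝ B) : ⟪x, y⟫ = 0 := by
  induction hx using Submodule.span_induction with
  | zero => simp
  | add u v _ _ hu hv => rw [inner_add_left, hu, hv, add_zero]
  | smul c u _ hu => rw [real_inner_smul_left, hu, mul_zero]
  | mem u hu =>
    induction hy using Submodule.span_induction with
    | zero => simp
    | add v w _ _ hv hw => rw [inner_add_right, hv, hw, add_zero]
    | smul c v _ hv => rw [real_inner_smul_right, hv, mul_zero]
    | mem v hv => exact h u hu v hv

lemma simple_span : ⊤ ≤ Submodule.span ℝ (Set.range (fun x : {a : V // a ∈ S.Δ} => x.1)) := by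
  rw [← S.span_eq_top, Submodule.span_le]
  have hpos : ∀ β ∈ S.pos,
      β ∈ Submodule.span ℝ (Set.range (fun x : {a : V // a ∈ S.Δ} => x.1)) := by
    intro β hβ
    obtain ⟨c, _, h⟩ := S.simple_gen β hβ
    rw [h]
    exact Submodule.sum_mem _ fun a ha => Submodule.smul_mem _ _
      (Submodule.subset_span ⟨⟨a, ha⟩, rfl⟩)
  intro β hβ
  rcases S.mem_pos_or β hβ with h | h
  · exact hpos β h
  · have := Submodule.neg_mem _ (hpos _ h)
    rwa [neg_neg] at this

lemma pos_induction (P : V → Prop) (h0 : ∀ a ∈ S.Δ, P a)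
    (h1 : ∀ a ∈ S.Δ, ∀ β, P (reflV a β) → P β) : ∀ β ∈ S.pos, P β := by
  set b := Module.Basis.mk S.simple_indep (simple_span S) with hb
  have hba : ∀ a : {a : V // a ∈ S.Δ}, b a = a.1 := fun a => by simp [hb]
  have hsum : ∀ v, v = ∑ a, b.repr v a • a.1 := by
    intro v
    conv_lhs => rw [← b.sum_repr v]
    simp only [hba]
  have hnn : ∀ β ∈ S.pos, ∀ a, 0 ≤ b.repr β a := by
    intro β hβ a
    obtain ⟨c, hc, h⟩ := S.simple_gen β hβ
    have h2 : β = ∑ x : {a : V // a ∈ S.Δ}, c x.1 • b x := by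
      simp only [hba]
      rw [h]
      exact (Finset.sum_coe_sort S.Δ (fun a => c a • a)).symm
    rw [h2, b.repr_sum_self]
    exact hc a.1 a.2
  set ht : V → ℝ := fun v => ∑ a, b.repr v a with hht
  by_contra hcon
  push Not at hcon
  obtain ⟨β₀, hβ₀, hn₀⟩ := hcon
  obtain ⟨β, hβ, hmin⟩ := Finset.exists_min_image (S.pos.filter fun β => ¬ P β) ht
    ⟨β₀, Finset.mem_filter.mpr ⟨hβ₀, hn₀⟩⟩
  obtain ⟨hβp, hβP⟩ := Finset.mem_filter.mp hβ
  have hβΦ := S.pos_subset hβp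
  have hpos : 0 < ⟪β, β⟫ := real_inner_self_pos.mpr (S.ne_zero β hβΦ)
  have hex : ∃ a : {a : V // a ∈ S.Δ}, 0 < ⟪β, a.1⟫ := by
    by_contra hh
    push Not at hh
    have h2 : ⟪β, β⟫ = ∑ a, b.repr β a * ⟪β, a.1⟫ := by
      conv_lhs => rw [hsum β, ← hsum β]
      conv_lhs => enter [3]; rw [hsum β]
      rw [inner_sum]
      simp only [real_inner_smul_right]
    have h3 : ⟪β, β⟫ ≤ 0 := by
      rw [h2]
      exact Finset.sum_nonpos fun a _ => mul_nonpos_of_nonneg_of_nonpos (hnn β hβp a) (hh a)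
    linarith
  obtain ⟨a, ha⟩ := hex
  have haΦ := S.pos_subset (S.simple_subset a.2)
  have haa : 0 < ⟪a.1, a.1⟫ := real_inner_self_pos.mpr (S.ne_zero _ haΦ)
  set t := ⟪β, coroot a.1⟫ with ht'
  have htpos : 0 < t := by
    rw [ht', inner_coroot]; positivity
  have hrefl : reflV a.1 β = β - t • b a := by rw [reflV_apply, hba]
  have hmem : reflV a.1 β ∈ S.Φ := S.refl_mem _ haΦ _ hβΦ
  have hnP : ¬ P (reflV a.1 β) := fun h => hβP (h1 a.1 a.2 β h)
  have hrep : ∀ c, b.repr (reflV a.1 β) c = b.repr β c - if a = c then t else 0 := by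
    intro c
    rw [hrefl]
    simp [Finsupp.single_apply]
  rcases S.mem_pos_or _ hmem with h | h
  · have h2 := hmin _ (Finset.mem_filter.mpr ⟨h, hnP⟩)
    have h3 : ht (reflV a.1 β) = ht β - t := by
      simp only [hht, hrep, Finset.sum_sub_distrib]
      simp
    linarith
  · have h2 : ∀ c, c ≠ a → b.repr β c = 0 := by
      intro c hc
      have h3 := hnn _ h c
      rw [map_neg, Finsupp.neg_apply, hrep, if_neg (Ne.symm hc)] at h3
      have h4 := hnn β hβp c
      linarith
    have h5 : β = b.repr β a • a.1 := by
      conv_lhs => rw [hsum β]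
      refine Finset.sum_eq_single a ?_ ?_
      · intro c _ hc; rw [h2 c hc, zero_smul]
      · intro h; exact absurd (Finset.mem_univ a) h
    rcases S.reduced a.1 haΦ _ (h5 ▸ hβΦ) with h6 | h6
    · rw [h6, one_smul] at h5
      exact hβP (h5 ▸ h0 a.1 a.2)
    · have := hnn β hβp a
      linarith

/-- the type of irreducible components -/
abbrev Comps := {c : Set V // c ∈ component S '' (S.Φ : Set V)}

lemma exists_coord
    (htypeA : ∀ β ∈ (S.Φ : Set V), ∃ (k : ℕ) (e : Fin k → V), Function.Injective e ∧
      Set.range e = (S.Δ : Set V) ∩ component S β ∧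
      ∀ a b : Fin k, ⟪e a, coroot (e b)⟫ = (cartanA ((a : ℕ) + 1) ((b : ℕ) + 1) : ℝ)) :
    ∃ (k : Comps S → ℕ), Nonempty (Coord S (Σ c : Comps S, Fin (k c + 1)) (Comps S)) := by
  let κ := Comps S
  have hdata : ∀ c : κ, ∃ (k : ℕ) (E : Fin (k + 1) → V) (N : ℝ), 0 < N ∧
      (∀ p q m, ⟪E p - E q, E m⟫ =
        N / 2 * ((if m = p then 1 else 0) - (if m = q then 1 else 0))) ∧
      (∀ i : Fin k, E i.castSucc - E i.succ ∈ S.Φ) ∧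
      (∀ a ∈ S.Δ, a ∈ c.1 → ∃ i : Fin k, a = E i.castSucc - E i.succ) ∧
      ∀ m, E m ∈ Submodule.span ℝ c.1 := by
    rintro ⟨c, β, hβ, rfl⟩
    obtain ⟨k, e, _, hr, hC⟩ := htypeA β hβ
    have hmem : ∀ i, e i ∈ (S.Δ : Set V) ∩ component S β := fun i => hr ▸ ⟨i, rfl⟩
    obtain ⟨N, hN, hG⟩ := gram e
      (fun i => S.ne_zero _ (S.pos_subset (S.simple_subset (hmem i).1))) hC
    obtain ⟨E, hE1, hE2, hE3⟩ := chain e N hG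
    refine ⟨k, E, N, hN, hE2, ?_, ?_, ?_⟩
    · intro i; rw [hE1]; exact (hmem i).2.1
    · intro a ha hac
      have : a ∈ Set.range e := hr ▸ ⟨ha, hac⟩
      obtain ⟨i, rfl⟩ := this
      exact ⟨i, (hE1 i).symm⟩
    · intro m
      refine Submodule.span_mono ?_ (hE3 m)
      rintro _ ⟨i, rfl⟩
      exact (hmem i).2
  choose k E N hN hin hstep hsimple hspan using hdata
  let F : (Σ c : κ, Fin (k c + 1)) → V := fun x => E x.1 x.2
  have hinner : ∀ i j m : (Σ c : κ, Fin (k c + 1)), i.1 = j.1 → ⟪F i - F j, F m⟫ =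
      N i.1 / 2 * ((if m = i then 1 else 0) - (if m = j then 1 else 0)) := by
    rintro ⟨c, i⟩ ⟨c', j⟩ ⟨d, m⟩ h
    obtain rfl : c = c' := h
    by_cases hd : d = c
    · subst hd
      simp only [F, Sigma.mk.injEq, heq_eq_eq, true_and]
      exact hin d i j m
    · have h1 : ⟪F ⟨c, i⟩ - F ⟨c, j⟩, F ⟨d, m⟩⟫ = 0 := by
        refine span_orth (A := c.1) (B := d.1) ?_
          (Submodule.sub_mem _ (hspan c i) (hspan c j)) (hspan d m)
        obtain ⟨c, β, hβ, rfl⟩ := c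
        obtain ⟨d, β', hβ', rfl⟩ := d
        intro x hx y hy
        refine component_orth S hx hy ?_
        intro h
        apply hd
        exact Subtype.ext h.symm
      rw [h1]
      simp [hd]
  have hrefl : ∀ i j m : (Σ c : κ, Fin (k c + 1)), i ≠ j → i.1 = j.1 →
      reflV (F i - F j) (F m) = F (Equiv.swap i j m) := by
    intro i j m hij hc
    convert refl_swap (E := F) (hN i.1) hij (fun m => by convert hinner i j m hc) m
  have hlt : ∀ (c : κ) (i j : Fin (k c + 1)), i < j → E c i - E c j ∈ S.Φ := by
    intro c i j
    induction j using Fin.induction with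
    | zero => intro h; exact absurd h (Fin.not_lt_zero i)
    | succ j ih =>
      intro h
      rcases (show i ≤ j.castSucc from Nat.lt_succ_iff.mp h).lt_or_eq with h1 | h1
      · have h2 := S.refl_mem _ (hstep c j) _ (ih h1)
        have h3 : (⟨c, j.castSucc⟩ : Σ c : κ, Fin (k c + 1)) ≠ ⟨c, j.succ⟩ := by
          simp [Fin.ext_iff]
        have h4 := hrefl ⟨c, j.castSucc⟩ ⟨c, j.succ⟩ ⟨c, i⟩ h3 rfl
        have h5 := hrefl ⟨c, j.castSucc⟩ ⟨c, j.succ⟩ ⟨c, j.castSucc⟩ h3 rfl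
        rw [Equiv.swap_apply_of_ne_of_ne (by simpa using h1.ne) (by simpa using h.ne)] at h4
        rw [Equiv.swap_apply_left] at h5
        simp only [F] at h4 h5
        rwa [map_sub, h4, h5] at h2
      · rw [h1]; exact hstep c j
  have hswap : ∀ i j m : (Σ c : κ, Fin (k c + 1)), i.1 = j.1 →
      (Equiv.swap i j m).1 = m.1 := by
    intro i j m h
    rw [Equiv.swap_apply_def]
    split_ifs with h1 h2
    · rw [h1, h]
    · rw [h2, h]
    · rfl
  let T : V → Prop := fun α => ∃ i j : (Σ c : κ, Fin (k c + 1)),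
    i ≠ j ∧ i.1 = j.1 ∧ α = F i - F j
  have hsimpleT : ∀ a ∈ S.Δ, ∃ (c : κ) (i : Fin (k c)), a = E c i.castSucc - E c i.succ := by
    intro a ha
    have haΦ : a ∈ S.Φ := S.pos_subset (S.simple_subset ha)
    obtain ⟨i, hi⟩ := hsimple ⟨component S a, a, haΦ, rfl⟩ a ha ⟨haΦ, Relation.ReflTransGen.refl⟩
    exact ⟨_, i, hi⟩
  have hne : ∀ (c : κ) (i : Fin (k c)),
      (⟨c, i.castSucc⟩ : Σ c : κ, Fin (k c + 1)) ≠ ⟨c, i.succ⟩ := by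
    intro c i
    simp [Fin.ext_iff]
  have hposT : ∀ β ∈ S.pos, T β := by
    apply pos_induction S T
    · intro a ha
      obtain ⟨c, i, h⟩ := hsimpleT a ha
      exact ⟨⟨c, i.castSucc⟩, ⟨c, i.succ⟩, hne c i, rfl, h⟩
    · rintro a ha β ⟨p, q, hpq, hc, h⟩
      obtain ⟨c, i, rfl⟩ := hsimpleT a ha
      set u : (Σ c : κ, Fin (k c + 1)) := ⟨c, i.castSucc⟩
      set v : (Σ c : κ, Fin (k c + 1)) := ⟨c, i.succ⟩
      refine ⟨Equiv.swap u v p, Equiv.swap u v q, fun hh => hpq ((Equiv.swap u v).injective hh),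
        ?_, ?_⟩
      · rw [hswap u v p rfl, hswap u v q rfl, hc]
      · rw [← hrefl u v p (hne c i) rfl, ← hrefl u v q (hne c i) rfl, ← map_sub, ← h]
        exact (reflV_reflV _ _).symm
  refine ⟨k, ⟨⟨F, Sigma.fst, N, hN, fun i j m h => by convert hinner i j m h, ?_, ?_⟩⟩⟩
  · rintro ⟨c, i⟩ ⟨c', j⟩ hij h
    obtain rfl : c = c' := h
    have hij' : i ≠ j := fun h => hij (by rw [h])
    rcases lt_or_gt_of_ne hij' with h | h
    · exact hlt c i j h
    · have := neg_mem S (hlt c j i h)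
      rwa [neg_sub] at this
  · intro α hα
    rcases S.mem_pos_or α hα with h | h
    · exact hposT α h
    · obtain ⟨i, j, hij, hc, h1⟩ := hposT _ h
      exact ⟨j, i, hij.symm, hc.symm, by rw [← neg_sub, ← h1, neg_neg]⟩

end helpers

/-- Theorem 7.4 (Jantzen, Satz 4): if every irreducible component of `Φ` is of type `A`
(each component's simple roots admit an enumeration whose Cartan matrix is of type `A`),
then for `λ ∈ Λ_I⁺` the sum `Σ_{β ∈ Ψ_λ⁺} θ(s_β λ)` vanishes iff `Ψ_λ⁺⁺ = ∅`. -/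
theorem statement_18 {V : Type*} [NormedAddCommGroup V] [InnerProductSpace ℝ V]
    [FiniteDimensional ℝ V]
    (S : RootSys V)
    (htypeA : ∀ β ∈ (S.Φ : Set V), ∃ (k : ℕ) (e : Fin k → V), Function.Injective e ∧
      Set.range e = (S.Δ : Set V) ∩ component S β ∧
      ∀ a b : Fin k, ⟪e a, coroot (e b)⟫ = (cartanA ((a : ℕ) + 1) ((b : ℕ) + 1) : ℝ))
    (I : Finset V) (hI : I ⊆ S.Δ)
    (lam : HStar V) (hlam : lam ∈ LambdaP (I : Set V)) :
    (∑ᶠ β ∈ PsiP S (PhiI S I) (S.Φ : Set V) lam, theta S I (sRefl β lam)) = 0 ↔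
      PsiPP S (PhiI S I) (S.Φ : Set V) lam = ∅ := by
  obtain ⟨k, ⟨C⟩⟩ := exists_coord S htypeA
  have hfin : Finite (Comps S) := (S.Φ.finite_toSet.image (component S)).to_subtype
  exact C.main S I hI lam hlam

end JantzenGVM
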